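/- Let β* = 0 if h_i − h_j ≤ 2L for all indices i, j, and otherwise let β* be the maximum of (h_i − h_j − 2L)/|t_i − t_j| over all pairs with h_i − h_j > 2L. Then there exists a feasible β*-path g* such that for every β ≥ 0 and every feasible β-path g, the number of links of g* is at most the number of links of g. (A minimum-link feasible path can be taken to have slope exactly β*.) -/

import Mathlib

/-- `PWLinSlope β a b g` : `g` is continuous piecewise-linear on `[a, b]`,
affine with slope `β` or `-β` on each interval of some finite partition of `[a, b]`. -/
def PWLinSlope (β a b : ℝ) (g : ℝ → ℝ) : Prop :=
  ∃ m : ℕ, ∃ s : ℕ → ℝ, s 0 = a ∧ s m = b ∧ (∀ k < m, s k < s (k + 1)) ∧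
    ∀ k < m, ∃ σ : ℝ, (σ = β ∨ σ = -β) ∧
      ∀ x ∈ Set.Icc (s k) (s (k + 1)), g x = g (s k) + σ * (x - s k)

/-- `Feasible a b L f β g` : `g` is a feasible `β`-path over `[a, b]` for the corridor of
half-width `L` around the α-path `f`. -/
def Feasible (a b L : ℝ) (f : ℝ → ℝ) (β : ℝ) (g : ℝ → ℝ) : Prop :=
  PWLinSlope β a b g ∧ ∀ x ∈ Set.Icc a b, |g x - f x| ≤ L

/-- The number of links of `g` on `[a, b]`: the minimal number of intervals in a finite
partition of `[a, b]` into intervals on each of which `g` is affine. -/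
noncomputable def numLinks (a b : ℝ) (g : ℝ → ℝ) : ℕ :=
  sInf {m : ℕ | ∃ s : ℕ → ℝ, s 0 = a ∧ s m = b ∧ (∀ k < m, s k < s (k + 1)) ∧
    ∀ k < m, ∃ c σ : ℝ, ∀ x ∈ Set.Icc (s k) (s (k + 1)), g x = c + σ * x}

/-- a path with at most `J` pieces -/
def PL9 (B a b : ℝ) (J : ℕ) (g : ℝ → ℝ) : Prop :=
  ∃ m : ℕ, m ≤ J ∧ ∃ s : ℕ → ℝ, s 0 = a ∧ s m = b ∧ (∀ k < m, s k < s (k + 1)) ∧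
    ∀ k < m, ∃ σ : ℝ, (σ = B ∨ σ = -B) ∧
      ∀ x ∈ Set.Icc (s k) (s (k + 1)), g x = g (s k) + σ * (x - s k)

theorem PL9.mono {B a b : ℝ} {J J' : ℕ} {g : ℝ → ℝ} (h : PL9 B a b J g) (hJ : J ≤ J') :
    PL9 B a b J' g := by
  obtain ⟨m, hm, r⟩ := h
  exact ⟨m, hm.trans hJ, r⟩

theorem part_le (s : ℕ → ℝ) (m : ℕ) (hs : ∀ k < m, s k < s (k + 1)) :
    ∀ j ≤ m, ∀ i ≤ j, s i ≤ s j := by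
  intro j
  induction j with
  | zero => intro _ i hi; rw [Nat.le_zero.mp hi]
  | succ j ih =>
    intro hj i hi
    rcases Nat.lt_or_ge i (j + 1) with h | h
    · exact (ih (by omega) i (by omega)).trans (hs j (by omega)).le
    · rw [show i = j + 1 by omega]

theorem locate9 (s : ℕ → ℝ) (x : ℝ) (h0 : s 0 ≤ x) :
    ∀ m, x < s m → ∃ k < m, s k ≤ x ∧ x < s (k + 1) := by
  intro m
  induction m with
  | zero => intro h; exact absurd h (not_lt.mpr h0)
  | succ m ih =>
    intro h
    by_cases h' : x < s m
    · obtain ⟨k, hk, r⟩ := ih h'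
      exact ⟨k, by omega, r⟩
    · exact ⟨m, by omega, not_lt.mp h', h⟩

theorem locate9' (s : ℕ → ℝ) (x : ℝ) (h0 : s 0 ≤ x) (m : ℕ) (hm : 1 ≤ m)
    (hs : ∀ k < m, s k < s (k + 1)) (h : x ≤ s m) :
    ∃ k < m, x ∈ Set.Icc (s k) (s (k + 1)) := by
  rcases h.lt_or_eq with h | h
  · obtain ⟨k, hk, r1, r2⟩ := locate9 s x h0 m h
    exact ⟨k, hk, r1, r2.le⟩
  · refine ⟨m - 1, by omega, ?_⟩
    have := hs (m - 1) (by omega)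
    rw [show m - 1 + 1 = m by omega] at *
    exact ⟨h ▸ this.le, h.le⟩

theorem PWLinSlope.lip {β a b : ℝ} {g : ℝ → ℝ} (hβ : 0 ≤ β) (h : PWLinSlope β a b g) :
    ∀ x ∈ Set.Icc a b, ∀ y ∈ Set.Icc a b, |g x - g y| ≤ β * |x - y| := by
  obtain ⟨m, s, h0, hm, hs, hg⟩ := h
  have key : ∀ k ≤ m, ∀ x y, a ≤ x → x ≤ y → y ≤ s k → |g y - g x| ≤ β * (y - x) := by
    intro k
    induction k with
    | zero =>
      intro _ x y h1 h2 h3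
      have : x = y := by linarith
      subst this; simp
    | succ k ih =>
      intro hk x y h1 h2 h3
      have ih' := ih (by omega)
      obtain ⟨σ, hσ, hl⟩ := hg k (by omega)
      have hak : a ≤ s k := h0 ▸ part_le s m hs k (by omega) 0 (by omega)
      have hσ' : ∀ z, 0 ≤ z → |σ * z| ≤ β * z := by
        intro z hz
        rw [abs_mul, abs_of_nonneg hz]
        rcases hσ with h | h <;> simp [h, abs_of_nonneg hβ]
      rcases le_total y (s k) with c | c
      · exact ih' x y h1 h2 c
      rcases le_total x (s k) with c' | c'
      · have e1 := ih' x (s k) h1 c' le_rfl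
        have e2 := hσ' (y - s k) (by linarith)
        rw [hl y ⟨c, h3⟩]
        have : g (s k) + σ * (y - s k) - g x = (g (s k) - g x) + σ * (y - s k) := by ring
        rw [this]
        refine (abs_add_le _ _).trans ?_
        linarith
      · have e2 := hσ' (y - x) (by linarith)
        rw [hl y ⟨c, h3⟩, hl x ⟨c', by linarith⟩]
        convert e2 using 2
        ring
  intro x hx y hy
  rcases le_total x y with c | c
  · have := key m le_rfl x y hx.1 c (hm ▸ hy.2)
    rw [abs_sub_comm, abs_sub_comm x y, abs_of_nonneg (sub_nonneg.mpr c)]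
    exact this
  · have := key m le_rfl y x hy.1 c (hm ▸ hx.2)
    rw [abs_of_nonneg (sub_nonneg.mpr c)]
    exact this

/-- extend a path from `τ` by a ray -/
noncomputable def ext9 (γ : ℝ → ℝ) (τ c : ℝ) (x : ℝ) : ℝ :=
  if x ≤ τ then γ x else γ τ + c * (x - τ)

theorem ext9_le {γ : ℝ → ℝ} {τ c x : ℝ} (h : x ≤ τ) : ext9 γ τ c x = γ x := by simp [ext9, h]

theorem ext9_ge {γ : ℝ → ℝ} {τ c x : ℝ} (h : τ ≤ x) : ext9 γ τ c x = γ τ + c * (x - τ) := by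
  rcases h.eq_or_lt with h | h
  · subst h; simp [ext9]
  · simp [ext9, not_le.mpr h]

theorem PL9.extend {B a τ τ' d : ℝ} {J : ℕ} {γ : ℝ → ℝ} (h : PL9 B a τ J γ) (hτ : τ ≤ τ')
    (hd : d = 1 ∨ d = -1) : PL9 B a τ' (J + 1) (ext9 γ τ (d * B)) := by
  obtain ⟨m, hm, s, h0, hsm, hs, hg⟩ := h
  have hle : ∀ k ≤ m, s k ≤ τ := fun k hk => hsm ▸ part_le s m hs m le_rfl k hk
  have hold : ∀ k < m, ∃ σ : ℝ, (σ = B ∨ σ = -B) ∧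
      ∀ x ∈ Set.Icc (s k) (s (k + 1)), ext9 γ τ (d * B) x
        = ext9 γ τ (d * B) (s k) + σ * (x - s k) := by
    intro k hk
    obtain ⟨σ, hσ, hl⟩ := hg k hk
    refine ⟨σ, hσ, fun x hx => ?_⟩
    rw [ext9_le (hx.2.trans (hle _ (by omega))), ext9_le (hle _ (by omega))]
    exact hl x hx
  rcases hτ.eq_or_lt with e | e
  · subst e
    exact ⟨m, by omega, s, h0, hsm, hs, hold⟩
  · refine ⟨m + 1, by omega, fun k => if k ≤ m then s k else τ', by simp [h0], by simp, ?_, ?_⟩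
    · intro k hk
      rcases Nat.lt_or_ge k m with c | c
      · simpa [c.le, Nat.succ_le_of_lt c] using hs k c
      · have : k = m := by omega
        subst this
        simpa [hsm] using e
    · intro k hk
      rcases Nat.lt_or_ge k m with c | c
      · simpa [c.le, Nat.succ_le_of_lt c] using hold k c
      · have : k = m := by omega
        subst this
        refine ⟨d * B, ?_, ?_⟩
        · rcases hd with h | h <;> simp [h]
        · intro x hx
          simp [hsm] at hx ⊢
          rw [ext9_ge hx.1, ext9_le le_rfl]

theorem noviol9 {a b L B β p u τ w Y : ℝ} {F G : ℝ → ℝ}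
    (hB : 0 ≤ B) (hBβ : B ≤ β)
    (hLip : ∀ x ∈ Set.Icc a b, ∀ y ∈ Set.Icc a b, F x - F y ≤ 2 * L + B * |x - y|)
    (hG : ∀ x ∈ Set.Icc a b, |G x - F x| ≤ L)
    (ha : a ≤ p) (haτ : a ≤ τ) (hτu : τ ≤ u) (hub : u ≤ b) (hpu : p ≤ u)
    (hlin : ∀ x ∈ Set.Icc p w, G x = G p + β * (x - p))
    (hY : Y = F u - L - B * (u - τ)) (x v : ℝ) (hx : τ ≤ x) (hxv : x ≤ v) (hvb : v ≤ b)
    (h : x ≤ u ∨ v ≤ w) :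
    Y + B * (x - τ) ≤ F v + L + B * (v - x) := by
  have case1 : x ≤ u → Y + B * (x - τ) ≤ F v + L + B * (v - x) := by
    intro h
    have := hLip u ⟨by linarith, hub⟩ v ⟨by linarith, hvb⟩
    have h2 : |u - v| ≤ (u - x) + (v - x) := by
      rw [abs_le]; constructor <;> linarith
    have := mul_le_mul_of_nonneg_left h2 hB
    nlinarith
  rcases le_total x u with c | c
  · exact case1 c
  rcases h with h | h
  · exact case1 h
  have e1 := hlin u ⟨hpu, by linarith⟩
  have e2 := hlin v ⟨by linarith, h⟩
  have e3 := abs_le.mp (hG u ⟨by linarith, hub⟩)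
  have e4 := abs_le.mp (hG v ⟨by linarith, hvb⟩)
  have e5 : B * (v - u) ≤ β * (v - u) := mul_le_mul_of_nonneg_right hBβ (by linarith)
  have e6 : 0 ≤ B * (v - x) := mul_nonneg hB (by linarith)
  nlinarith

theorem step9 {a b L B β p u τ w Y : ℝ} {F G : ℝ → ℝ}
    (hB : 0 ≤ B) (hBβ : B ≤ β) (hF : ContinuousOn F (Set.Icc a b))
    (hLip : ∀ x ∈ Set.Icc a b, ∀ y ∈ Set.Icc a b, F x - F y ≤ 2 * L + B * |x - y|)
    (hG : ∀ x ∈ Set.Icc a b, |G x - F x| ≤ L)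
    (ha : a ≤ p) (haτ : a ≤ τ) (hτu : τ ≤ u) (hub : u ≤ b) (hpu : p ≤ u) (hwb : w ≤ b)
    (hlin : ∀ x ∈ Set.Icc p w, G x = G p + β * (x - p))
    (hY : Y = F u - L - B * (u - τ))
    (hlow : ∀ v ∈ Set.Icc τ b, F v - L - B * (v - τ) ≤ Y) :
    ∃ τ', τ ≤ τ' ∧ τ' ≤ b ∧ (∀ x ∈ Set.Icc τ τ', |Y + B * (x - τ) - F x| ≤ L) ∧
      (∀ v ∈ Set.Icc τ' b, Y + B * (τ' - τ) ≤ F v + L + B * (v - τ')) ∧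
      (τ' = b ∨ (w < b ∧ ∃ u', τ' ≤ u' ∧ w ≤ u' ∧ u' ≤ b ∧
        Y + B * (τ' - τ) = F u' + L + B * (u' - τ'))) := by
  have nv := noviol9 hB hBβ hLip hG ha haτ hτu hub hpu hlin hY
  set R : Set ℝ := {r | r ∈ Set.Icc τ b ∧ ∀ x ∈ Set.Icc τ r, ∀ v ∈ Set.Icc x b,
    Y + B * (x - τ) ≤ F v + L + B * (v - x)} with hR
  have hτR : τ ∈ R := ⟨⟨le_rfl, by linarith⟩, fun x hx v hv =>
    nv x v hx.1 hv.1 hv.2 (Or.inl (by linarith [hx.2]))⟩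
  have hbdd : BddAbove R := ⟨b, fun r hr => hr.1.2⟩
  set T := sSup R with hT
  have hτT : τ ≤ T := le_csSup hbdd hτR
  have hTb : T ≤ b := csSup_le ⟨τ, hτR⟩ fun r hr => hr.1.2
  have hlt : ∀ x ∈ Set.Ico τ T, ∀ v ∈ Set.Icc x b,
      Y + B * (x - τ) ≤ F v + L + B * (v - x) := by
    intro x hx v hv
    obtain ⟨r, hr, hxr⟩ := exists_lt_of_lt_csSup ⟨τ, hτR⟩ hx.2
    exact hr.2 x ⟨hx.1, hxr.le⟩ v hv
  have hTall : ∀ v ∈ Set.Icc T b, Y + B * (T - τ) ≤ F v + L + B * (v - T) := by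
    intro v hv
    rcases hτT.eq_or_lt with e | e
    · rw [← e]; rw [← e] at hv
      exact hτR.2 τ ⟨le_rfl, le_rfl⟩ v hv
    by_contra hcon
    push Not at hcon
    set ε := Y + B * (T - τ) - (F v + L + B * (v - T)) with hε
    have hεp : 0 < ε := by linarith
    have hδ : 0 < ε / (2 * B + 1) := by positivity
    set x := max τ (T - ε / (2 * B + 1)) with hx
    have hxT : x < T := max_lt e (by linarith)
    have h1 := hlt x ⟨le_max_left _ _, hxT⟩ v ⟨by linarith [hv.1], hv.2⟩
    have h2 : T - x ≤ ε / (2 * B + 1) := by linarith [le_max_right τ (T - ε / (2 * B + 1))]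
    rw [le_div_iff₀ (by linarith)] at h2
    nlinarith
  have hTR : ∀ x ∈ Set.Icc τ T, ∀ v ∈ Set.Icc x b,
      Y + B * (x - τ) ≤ F v + L + B * (v - x) := by
    intro x hx
    rcases hx.2.eq_or_lt with e | e
    · rw [e]; exact hTall
    · exact hlt x ⟨hx.1, e⟩
  refine ⟨T, hτT, hTb, ?_, hTall, ?_⟩
  · intro x hx
    rw [abs_le]
    have h1 := hTR x hx x ⟨le_rfl, hx.2.trans hTb⟩
    have h2 := hlow x ⟨hx.1, hx.2.trans hTb⟩
    constructor <;> linarith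
  rcases hTb.eq_or_lt with e | e
  · exact Or.inl e
  right
  have hwb' : w < b := by
    by_contra hc
    have : b ∈ R := ⟨⟨by linarith, le_rfl⟩, fun x hx v hv =>
      nv x v hx.1 hv.1 hv.2 (Or.inr (by linarith [hv.2]))⟩
    linarith [le_csSup hbdd this]
  refine ⟨hwb', ?_⟩
  have hqb : max T w ≤ b := max_le hTb hwb
  obtain ⟨u', hu', hmin⟩ := (isCompact_Icc (a := max T w) (b := b)).exists_isMinOn
    ⟨b, hqb, le_rfl⟩ (f := fun v => F v + B * v)
    ((hF.mono (Set.Icc_subset_Icc (by linarith [le_max_left T w]) le_rfl)).add (by fun_prop))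
  have hTu' : T ≤ u' := (le_max_left _ _).trans hu'.1
  refine ⟨u', hTu', (le_max_right _ _).trans hu'.1, hu'.2, le_antisymm (hTall u' ⟨hTu', hu'.2⟩) ?_⟩
  by_contra hcon
  push Not at hcon
  set ε := F u' + L + B * (u' - T) - (Y + B * (T - τ)) with hε
  have hεp : 0 < ε := by linarith
  have hδ : 0 < ε / (2 * B + 1) := by positivity
  have hr : min b (T + ε / (2 * B + 1)) ∈ R := by
    refine ⟨⟨le_min (by linarith) (by linarith), min_le_left _ _⟩, fun x hx v hv => ?_⟩
    rcases le_total x T with c | c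
    · exact hTR x ⟨hx.1, c⟩ v hv
    rcases le_total v w with c' | c'
    · exact nv x v hx.1 hv.1 hv.2 (Or.inr c')
    have hm : F u' + B * u' ≤ F v + B * v := hmin ⟨max_le (by linarith [hv.1]) c', hv.2⟩
    have h2 : x - T ≤ ε / (2 * B + 1) := by
      linarith [hx.2, min_le_right b (T + ε / (2 * B + 1))]
    rw [le_div_iff₀ (by linarith)] at h2
    nlinarith
  have h1 := le_csSup hbdd hr
  have h2 : T < min b (T + ε / (2 * B + 1)) := lt_min e (by linarith)
  linarith

/-- intermediate state of the greedy construction -/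
def St9 (f g : ℝ → ℝ) (B β L a b : ℝ) (J : ℕ) (w : ℝ) : Prop :=
  ∃ d p u τ : ℝ, ∃ γ : ℝ → ℝ, (d = 1 ∨ d = -1) ∧ a ≤ p ∧ p ≤ w ∧ a ≤ τ ∧ τ ≤ u ∧ u ≤ b ∧ p ≤ u ∧
    (∀ x ∈ Set.Icc p w, g x = g p + d * β * (x - p)) ∧ PL9 B a τ J γ ∧
    (∀ x ∈ Set.Icc a τ, |γ x - f x| ≤ L) ∧
    d * γ τ = d * f u - L - B * (u - τ) ∧
    ∀ v ∈ Set.Icc τ b, d * f v - L - B * (v - τ) ≤ d * γ τ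

def Fin9 (f : ℝ → ℝ) (B L a b : ℝ) (J : ℕ) : Prop :=
  ∃ γ : ℝ → ℝ, PL9 B a b J γ ∧ ∀ x ∈ Set.Icc a b, |γ x - f x| ≤ L

theorem lipd9 {a b L B : ℝ} {f : ℝ → ℝ}
    (hLip : ∀ x ∈ Set.Icc a b, ∀ y ∈ Set.Icc a b, f x - f y ≤ 2 * L + B * |x - y|)
    {d : ℝ} (hd : d = 1 ∨ d = -1) :
    ∀ x ∈ Set.Icc a b, ∀ y ∈ Set.Icc a b, d * f x - d * f y ≤ 2 * L + B * |x - y| := by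
  intro x hx y hy
  rcases hd with rfl | rfl
  · linarith [hLip x hx y hy]
  · have := hLip y hy x hx
    rw [abs_sub_comm] at this
    linarith

theorem absd9 {d : ℝ} (hd : d = 1 ∨ d = -1) (x : ℝ) : |d * x| = |x| := by
  rcases hd with rfl | rfl <;> simp

theorem move9 {a b L B β w : ℝ} {f g : ℝ → ℝ} {J : ℕ}
    (hB : 0 ≤ B) (hBβ : B ≤ β) (hf : ContinuousOn f (Set.Icc a b))
    (hLip : ∀ x ∈ Set.Icc a b, ∀ y ∈ Set.Icc a b, f x - f y ≤ 2 * L + B * |x - y|)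
    (hg : ∀ x ∈ Set.Icc a b, |g x - f x| ≤ L) (hwb : w ≤ b)
    (d p u τ : ℝ) (γ : ℝ → ℝ) (hd : d = 1 ∨ d = -1) (hap : a ≤ p) (hpw : p ≤ w)
    (haτ : a ≤ τ) (hτu : τ ≤ u) (hub : u ≤ b) (hpu : p ≤ u)
    (hlin : ∀ x ∈ Set.Icc p w, g x = g p + d * β * (x - p)) (hPL : PL9 B a τ J γ)
    (hfe : ∀ x ∈ Set.Icc a τ, |γ x - f x| ≤ L)
    (hY : d * γ τ = d * f u - L - B * (u - τ))
    (hlow : ∀ v ∈ Set.Icc τ b, d * f v - L - B * (v - τ) ≤ d * γ τ) :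
    Fin9 f B L a b (J + 1) ∨ (w < b ∧ ∀ w', w ≤ w' →
      (∀ x ∈ Set.Icc w w', g x = g w + (-d) * β * (x - w)) → St9 f g B β L a b (J + 1) w') := by
  have hdd : d * d = 1 := by rcases hd with rfl | rfl <;> norm_num
  have hlin' : ∀ x ∈ Set.Icc p w, d * g x = d * g p + β * (x - p) := by
    intro x hx
    rw [hlin x hx]; linear_combination β * (x - p) * hdd
  have hG : ∀ x ∈ Set.Icc a b, |d * g x - d * f x| ≤ L := by
    intro x hx
    rw [← mul_sub, absd9 hd]; exact hg x hx
  obtain ⟨T, hτT, hTb, h1, h2, h3⟩ := step9 (F := fun x => d * f x) (G := fun x => d * g x)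
    hB hBβ (continuousOn_const.mul hf) (lipd9 hLip hd) hG hap haτ hτu hub hpu hwb hlin' hY hlow
  have hPL' := hPL.extend hτT hd
  have hfe' : ∀ x ∈ Set.Icc a T, |ext9 γ τ (d * B) x - f x| ≤ L := by
    intro x hx
    rcases le_total x τ with c | c
    · rw [ext9_le c]; exact hfe x ⟨hx.1, c⟩
    · rw [ext9_ge c, ← absd9 hd]
      have := h1 x ⟨c, hx.2⟩
      convert this using 2
      linear_combination B * (x - τ) * hdd
  have hval : d * ext9 γ τ (d * B) T = d * γ τ + B * (T - τ) := by
    rw [ext9_ge hτT]; linear_combination B * (T - τ) * hdd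
  rcases h3 with rfl | ⟨hw, u', hTu', hwu', hu'b, he⟩
  · exact Or.inl ⟨_, hPL', hfe'⟩
  refine Or.inr ⟨hw, fun w' hw' hl => ?_⟩
  refine ⟨-d, w, u', T, _, ?_, hap.trans hpw, hw', haτ.trans hτT, hTu', hu'b, hwu', hl, hPL', hfe',
    ?_, ?_⟩
  · rcases hd with rfl | rfl <;> simp
  · linarith
  · intro v hv
    have := h2 v hv
    linarith

theorem conv9 {a b L B β : ℝ} {f g : ℝ → ℝ} {m : ℕ} {s : ℕ → ℝ} (hm : 1 ≤ m) (hab : a < b)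
    (hB : 0 ≤ B) (hBβ : B ≤ β) (hf : ContinuousOn f (Set.Icc a b))
    (hLip : ∀ x ∈ Set.Icc a b, ∀ y ∈ Set.Icc a b, f x - f y ≤ 2 * L + B * |x - y|)
    (hg : ∀ x ∈ Set.Icc a b, |g x - f x| ≤ L)
    (hs0 : s 0 = a) (hsm : s m = b) (hs : ∀ k < m, s k < s (k + 1))
    (hl : ∀ k < m, ∃ d : ℝ, (d = 1 ∨ d = -1) ∧
      ∀ x ∈ Set.Icc (s k) (s (k + 1)), g x = g (s k) + d * β * (x - s k)) :
    Fin9 f B L a b m := by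
  have hsb : ∀ k ≤ m, s k ≤ b := fun k hk => hsm ▸ part_le s m hs m le_rfl k hk
  have key : ∀ k, k + 1 ≤ m → Fin9 f B L a b (k + 1) ∨ St9 f g B β L a b k (s (k + 1)) := by
    intro k
    induction k with
    | zero =>
      intro _
      right
      obtain ⟨d, hd, hl0⟩ := hl 0 (by omega)
      have hdd : d * d = 1 := by rcases hd with rfl | rfl <;> norm_num
      obtain ⟨u, hu, hmax⟩ := (isCompact_Icc (a := a) (b := b)).exists_isMaxOn
        ⟨b, hab.le, le_rfl⟩ (f := fun v => d * f v - B * v)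
        ((continuousOn_const.mul hf).sub (by fun_prop))
      have hmax' : ∀ v ∈ Set.Icc a b, d * f v - B * v ≤ d * f u - B * u := fun v hv => hmax hv
      rw [hs0] at hl0
      have hval : d * (d * (d * f u - L - B * (u - a))) = d * f u - L - B * (u - a) := by
        linear_combination (d * f u - L - B * (u - a)) * hdd
      refine ⟨d, a, u, a, fun _ => d * (d * f u - L - B * (u - a)), hd, le_rfl, ?_, le_rfl, hu.1,
        hu.2, hu.1, hl0, ?_, ?_, hval, ?_⟩
      · exact hs0 ▸ (hs 0 (by omega)).le
      · exact ⟨0, le_rfl, s, hs0, hs0, by simp, by simp⟩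
      · intro x hx
        have : x = a := le_antisymm hx.2 hx.1
        subst this
        rw [← absd9 hd, mul_sub, hval, abs_le]
        have h1 := hmax' x ⟨le_rfl, hab.le⟩
        have h2 := lipd9 hLip hd u hu x ⟨le_rfl, hab.le⟩
        rw [abs_of_nonneg (by linarith [hu.1])] at h2
        constructor <;> linarith
      · intro v hv
        rw [hval]
        linarith [hmax' v hv]
    | succ k ih =>
      intro hk
      rcases ih (by omega) with h | h
      · obtain ⟨γ, h1, h2⟩ := h
        exact Or.inl ⟨γ, h1.mono (by omega), h2⟩
      obtain ⟨d, p, u, τ, γ, hd, hap, hpw, haτ, hτu, hub, hpu, hlin, hPL, hfe, hY, hlow⟩ := h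
      obtain ⟨d', hd', hl'⟩ := hl (k + 1) (by omega)
      have hlt := hs (k + 1) (by omega)
      by_cases e : d' = d
      · right
        subst e
        refine ⟨d', p, u, τ, γ, hd, hap, hpw.trans hlt.le, haτ, hτu, hub, hpu, ?_,
          hPL.mono (by omega), hfe, hY, hlow⟩
        intro x hx
        rcases le_total x (s (k + 1)) with c | c
        · exact hlin x ⟨hx.1, c⟩
        · rw [hl' x ⟨c, hx.2⟩, hlin _ ⟨hpw, le_rfl⟩]; ring
      · have e' : d' = -d := by
          rcases hd with h | h <;> rcases hd' with h' | h' <;> first | (exact absurd (h'.trans h.symm) e) | (rw [h, h']; try norm_num)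
        subst e'
        rcases move9 hB hBβ hf hLip hg (hsb (k + 1) (by omega)) d p u τ γ hd hap hpw haτ hτu hub hpu
          hlin hPL hfe hY hlow with h | h
        · obtain ⟨γ, h1, h2⟩ := h
          exact Or.inl ⟨γ, h1.mono (by omega), h2⟩
        · exact Or.inr (h.2 _ hlt.le hl')
  have := key (m - 1) (by omega)
  rw [show m - 1 + 1 = m by omega, hsm] at this
  rcases this with h | h
  · exact h
  obtain ⟨d, p, u, τ, γ, hd, hap, hpw, haτ, hτu, hub, hpu, hlin, hPL, hfe, hY, hlow⟩ := h
  rcases move9 hB hBβ hf hLip hg le_rfl d p u τ γ hd hap hpw haτ hτu hub hpu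
    hlin hPL hfe hY hlow with h | h
  · rwa [show m - 1 + 1 = m by omega] at h
  · exact absurd h.1 (lt_irrefl _)

/-- every feasible path can be replaced by a `B`-path with no more links -/
theorem improve9 {a b L B β : ℝ} {f g : ℝ → ℝ} (hab : a < b)
    (hB : 0 ≤ B) (hBβ : B ≤ β) (hf : ContinuousOn f (Set.Icc a b))
    (hLip : ∀ x ∈ Set.Icc a b, ∀ y ∈ Set.Icc a b, f x - f y ≤ 2 * L + B * |x - y|)
    (hg : Feasible a b L f β g) :
    ∃ γ, Feasible a b L f B γ ∧ numLinks a b γ ≤ numLinks a b g := by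
  obtain ⟨⟨m', s', h0', hm', hs', hg'⟩, hgf⟩ := hg
  have hne : {m : ℕ | ∃ s : ℕ → ℝ, s 0 = a ∧ s m = b ∧ (∀ k < m, s k < s (k + 1)) ∧
    ∀ k < m, ∃ c σ : ℝ, ∀ x ∈ Set.Icc (s k) (s (k + 1)), g x = c + σ * x}.Nonempty := by
    refine ⟨m', s', h0', hm', hs', fun k hk => ?_⟩
    obtain ⟨σ, _, h⟩ := hg' k hk
    exact ⟨g (s' k) - σ * s' k, σ, fun x hx => by rw [h x hx]; ring⟩
  obtain ⟨s, h0, hm, hs, hl⟩ := Nat.sInf_mem hne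
  change s (numLinks a b g) = b at hm
  change ∀ k < numLinks a b g, _ at hs
  change ∀ k < numLinks a b g, _ at hl
  set m := numLinks a b g with hmdef
  have hm1 : 1 ≤ m := by
    by_contra hc
    have : m = 0 := by omega
    rw [this] at hm
    linarith
  have hfin : Fin9 f B L a b m := by
    refine conv9 hm1 hab hB hBβ hf hLip hgf h0 hm hs fun k hk => ?_
    obtain ⟨c, σ, hcs⟩ := hl k hk
    have hk1 := hs k hk
    have hak : a ≤ s k := h0 ▸ part_le s m hs k hk.le 0 (by omega)
    have hkb : s (k + 1) ≤ b := hm ▸ part_le s m hs m le_rfl (k + 1) hk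
    obtain ⟨j, hj, hj1, hj2⟩ := locate9 s' (s k) (h0' ▸ hak) m' (by linarith)
    obtain ⟨σ', hσ', hl'⟩ := hg' j hj
    set y := min (s (k + 1)) (s' (j + 1)) with hy
    have hyk : s k < y := lt_min hk1 hj2
    have e1 := hcs y ⟨hyk.le, min_le_left _ _⟩
    have e2 := hcs (s k) ⟨le_rfl, hk1.le⟩
    have e3 := hl' y ⟨by linarith, min_le_right _ _⟩
    have e4 := hl' (s k) ⟨hj1, hj2.le⟩
    have : σ = σ' := by
      have : (σ - σ') * (y - s k) = 0 := by linarith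
      rcases mul_eq_zero.mp this with h | h <;> linarith
    subst this
    rcases hσ' with h | h
    · refine ⟨1, Or.inl rfl, fun x hx => ?_⟩
      rw [hcs x hx, e2, h]; ring
    · refine ⟨-1, Or.inr rfl, fun x hx => ?_⟩
      rw [hcs x hx, e2, h]; ring
  obtain ⟨γ, ⟨M, hM, S, H0, HM, HS, HG⟩, h2⟩ := hfin
  refine ⟨γ, ⟨⟨M, S, H0, HM, HS, HG⟩, h2⟩, le_trans (Nat.sInf_le ?_) hM⟩
  refine ⟨S, H0, HM, HS, fun k hk => ?_⟩
  obtain ⟨σ, _, h⟩ := HG k hk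
  exact ⟨γ (S k) - σ * S k, σ, fun x hx => by rw [h x hx]; ring⟩

theorem lin9 {A K p q v : ℝ} (h1 : 0 ≤ A + K * p) (h2 : 0 ≤ A + K * q) (hp : p ≤ v) (hq : v ≤ q) :
    0 ≤ A + K * v := by
  rcases le_total 0 K with h | h
  · nlinarith
  · nlinarith

/-- `Q y ≤ C + B |x - y|` interpolates from vertices -/
theorem interp9 {a b B C x : ℝ} {Q : ℝ → ℝ} {m : ℕ} {s : ℕ → ℝ} (hm : 1 ≤ m)
    (hs0 : s 0 = a) (hsm : s m = b) (hs : ∀ k < m, s k < s (k + 1))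
    (hl : ∀ k < m, ∃ σ : ℝ, ∀ y ∈ Set.Icc (s k) (s (k + 1)), Q y = Q (s k) + σ * (y - s k))
    (hx : Q x ≤ C) (hv : ∀ k ≤ m, Q (s k) ≤ C + B * |x - s k|) :
    ∀ y ∈ Set.Icc a b, Q y ≤ C + B * |x - y| := by
  intro y hy
  obtain ⟨k, hk, hky⟩ := locate9' s y (hs0 ▸ hy.1) m hm hs (hsm ▸ hy.2)
  obtain ⟨σ, hσ⟩ := hl k hk
  have v1 := hv k hk.le
  have v2 := hv (k + 1) hk
  rw [hσ (s (k + 1)) ⟨(hs k hk).le, le_rfl⟩] at v2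
  rw [hσ y hky]
  obtain ⟨k1, k2⟩ := hky
  rcases le_total y x with c | c
  · rw [abs_of_nonneg (by linarith)] at v1 ⊢
    suffices 0 ≤ (C + B * x - Q (s k) + σ * s k) + (-B - σ) * y by linarith
    rcases le_total x (s (k + 1)) with c' | c'
    · rw [hσ x ⟨by linarith, c'⟩] at hx
      exact lin9 (p := s k) (q := x) (by linarith) (by linarith) k1 c
    · rw [abs_of_nonneg (by linarith)] at v2
      exact lin9 (p := s k) (q := s (k + 1)) (by linarith) (by linarith) k1 k2
  · rw [abs_of_nonpos (by linarith)] at v2 ⊢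
    suffices 0 ≤ (C - B * x - Q (s k) + σ * s k) + (B - σ) * y by linarith
    rcases le_total (s k) x with c' | c'
    · rw [hσ x ⟨c', by linarith⟩] at hx
      exact lin9 (p := x) (q := s (k + 1)) (by linarith) (by linarith) c k2
    · rw [abs_of_nonpos (by linarith)] at v1
      exact lin9 (p := s k) (q := s (k + 1)) (by linarith) (by linarith) k1 k2

/-- there is a feasible β*-path whose number of links is at most the number
of links of every feasible β-path, for every β ≥ 0. -/
theorem stmt_9
    (n : ℕ) (hn : 1 ≤ n) (t h : ℕ → ℝ) (α L : ℝ) (f : ℝ → ℝ)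
    (hα : 0 < α) (hL : 0 < L)
    (ht : ∀ i < n, t i < t (i + 1))
    (hslope : ∀ i < n,
      h (i + 1) - h i = α * (t (i + 1) - t i) ∨ h (i + 1) - h i = -α * (t (i + 1) - t i))
    (halt : ∀ i, i + 1 < n → (h (i + 2) - h (i + 1)) * (h (i + 1) - h i) < 0)
    (hf : ∀ i < n, ∀ x ∈ Set.Icc (t i) (t (i + 1)),
      f x = h i + (x - t i) * ((h (i + 1) - h i) / (t (i + 1) - t i)))
    (βstar : ℝ)
    (hβ0 : (∀ i ≤ n, ∀ j ≤ n, h i - h j ≤ 2 * L) → βstar = 0)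
    (hβmax : (∃ i ≤ n, ∃ j ≤ n, h i - h j > 2 * L) →
      IsGreatest {s : ℝ | ∃ i ≤ n, ∃ j ≤ n,
        h i - h j > 2 * L ∧ s = (h i - h j - 2 * L) / |t i - t j|} βstar) :
    ∃ gstar : ℝ → ℝ, Feasible (t 0) (t n) L f βstar gstar ∧
      ∀ β : ℝ, 0 ≤ β → ∀ g : ℝ → ℝ, Feasible (t 0) (t n) L f β g →
        numLinks (t 0) (t n) gstar ≤ numLinks (t 0) (t n) g := by
  have hab : t 0 < t n := lt_of_lt_of_le (ht 0 (by omega)) (part_le t n ht n le_rfl 1 hn)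
  have hfh : ∀ i ≤ n, f (t i) = h i := by
    intro i hi
    rcases Nat.lt_or_ge i n with c | c
    · rw [hf i c (t i) ⟨le_rfl, (ht i c).le⟩]; ring
    · have hin : i - 1 + 1 = i := by omega
      have hlt := ht (i - 1) (by omega)
      have := hf (i - 1) (by omega) (t i) (by rw [hin] at hlt ⊢; exact ⟨hlt.le, le_rfl⟩)
      rw [hin] at this hlt
      rw [this]
      have : t i - t (i - 1) ≠ 0 := by linarith
      field_simp
      ring
  have hmem : ∀ i ≤ n, t i ∈ Set.Icc (t 0) (t n) := fun i hi =>
    ⟨part_le t n ht i hi 0 (by omega), part_le t n ht n le_rfl i hi⟩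
  have hflin : ∀ k < n, ∀ x ∈ Set.Icc (t k) (t (k + 1)),
      f x = f (t k) + ((h (k + 1) - h k) / (t (k + 1) - t k)) * (x - t k) := by
    intro k hk x hx
    rw [hf k hk x hx, hfh k hk.le]; ring
  have hfPW : PWLinSlope α (t 0) (t n) f := by
    refine ⟨n, t, rfl, rfl, ht, fun k hk => ⟨_, ?_, hflin k hk⟩⟩
    have : t (k + 1) - t k ≠ 0 := by linarith [ht k hk]
    rcases hslope k hk with e | e
    · left; rw [e]; field_simp
    · right; rw [e]; field_simp
  have hfF : Feasible (t 0) (t n) L f α f := ⟨hfPW, fun x _ => by simpa using hL.le⟩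
  have hfc : ContinuousOn f (Set.Icc (t 0) (t n)) := by
    have : LipschitzOnWith (Real.toNNReal α) f (Set.Icc (t 0) (t n)) := by
      refine LipschitzOnWith.of_dist_le_mul fun x hx y hy => ?_
      rw [Real.dist_eq, Real.dist_eq, Real.coe_toNNReal _ hα.le]
      exact hfPW.lip hα.le x hx y hy
    exact this.continuousOn
  have hpos : ∀ i ≤ n, ∀ j ≤ n, h i - h j > 2 * L → 0 < |t i - t j| := by
    intro i hi j hj hij
    rw [abs_pos, sub_ne_zero]
    intro e
    have := hfh i hi
    rw [e, hfh j hj] at this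
    linarith
  have hB : 0 ≤ βstar := by
    by_cases c : ∃ i ≤ n, ∃ j ≤ n, h i - h j > 2 * L
    · obtain ⟨i, hi, j, hj, hij, e⟩ := (hβmax c).1
      rw [e]
      exact div_nonneg (by linarith) (abs_nonneg _)
    · push Not at c
      rw [hβ0 c]
  have hBle : ∀ β : ℝ, 0 ≤ β → ∀ g : ℝ → ℝ, Feasible (t 0) (t n) L f β g → βstar ≤ β := by
    intro β hβ g hg
    by_cases c : ∃ i ≤ n, ∃ j ≤ n, h i - h j > 2 * L
    · obtain ⟨i, hi, j, hj, hij, e⟩ := (hβmax c).1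
      rw [e, div_le_iff₀ (hpos i hi j hj hij)]
      have h1 := (le_abs_self _).trans (hg.1.lip hβ _ (hmem i hi) _ (hmem j hj))
      have h2 := abs_le.mp (hg.2 _ (hmem i hi))
      have h3 := abs_le.mp (hg.2 _ (hmem j hj))
      rw [hfh i hi] at h2
      rw [hfh j hj] at h3
      linarith
    · push Not at c
      rw [hβ0 c]; exact hβ
  have hvv : ∀ i ≤ n, ∀ j ≤ n, h i - h j ≤ 2 * L + βstar * |t i - t j| := by
    intro i hi j hj
    by_cases c : h i - h j > 2 * L
    · have := (hβmax ⟨i, hi, j, hj, c⟩).2 ⟨i, hi, j, hj, c, rfl⟩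
      rw [div_le_iff₀ (hpos i hi j hj c)] at this
      linarith
    · have := mul_nonneg hB (abs_nonneg (t i - t j))
      linarith
  have hLip1 : ∀ j ≤ n, ∀ y ∈ Set.Icc (t 0) (t n), f y - f (t j) ≤ 2 * L + βstar * |t j - y| := by
    intro j hj
    refine interp9 (Q := fun y => f y - f (t j)) hn rfl rfl ht (fun k hk => ⟨(h (k + 1) - h k) / (t (k + 1) - t k), fun y hy => ?_⟩)
      ?_ ?_
    · rw [hflin k hk y hy]; ring
    · linarith
    · intro k hk
      rw [hfh k hk, hfh j hj, abs_sub_comm]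
      exact hvv k hk j hj
  have hLip : ∀ x ∈ Set.Icc (t 0) (t n), ∀ y ∈ Set.Icc (t 0) (t n),
      f x - f y ≤ 2 * L + βstar * |x - y| := by
    intro x hx
    refine interp9 (Q := fun y => f x - f y) hn rfl rfl ht (fun k hk => ⟨-((h (k + 1) - h k) / (t (k + 1) - t k)), fun y hy => ?_⟩)
      ?_ ?_
    · rw [hflin k hk y hy]; ring
    · linarith
    · intro k hk
      rw [abs_sub_comm]
      exact hLip1 k hk x hx
  have hne : {m : ℕ | ∃ γ, Feasible (t 0) (t n) L f βstar γ ∧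
      numLinks (t 0) (t n) γ = m}.Nonempty := by
    obtain ⟨γ, hγ, _⟩ := improve9 hab hB (hBle α hα.le f hfF) hfc hLip hfF
    exact ⟨_, γ, hγ, rfl⟩
  obtain ⟨γ, hγ, he⟩ := Nat.sInf_mem hne
  refine ⟨γ, hγ, fun β hβ g hg => ?_⟩
  obtain ⟨γ', hγ', hle⟩ := improve9 hab hB (hBle β hβ g hg) hfc hLip hg
  rw [he]
  exact le_trans (Nat.sInf_le (by exact ⟨γ', hγ', rfl⟩)) hle
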